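/- Let β < 1 (with α, β ∈ [0,1]) and let j ∈ ℤ. Let x be the (⊕⊖, j)-jump configuration: x i = true for i < j and x i = false for i ≥ j. Then the iterates F^t δ_x converge on thin cylinders, as t → ∞, to δ_{all-minus}, the Dirac measure at the constant configuration false. -/

import Mathlib

/-!
The update of a jump configuration is deterministic away from the last plus: every other plus sees
a plus on its right and survives, and no minus at or beyond the jump sees a plus. The last plus
survives with probability `β`. Hence, writing `δ_k` for the Dirac measure at the jump at `k`,
`F δ_k = β δ_k + (1 - β) δ_{k-1}` (`PCA.F_dirac_jump`), and, `F` being linear, the jump performs a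
lazy random walk to the left.

Convergence is obtained from an exponential bound rather than from the binomial law of the walk.
Fix a cylinder `A` over `S`, let `m` be a lower bound of `S`, and let `L` be the mass that
`δ_allMinus` gives to `A`. The function `k ↦ 2 ^ (k - m)` is multiplied by
`β + (1 - β) / 2 = (1 + β) / 2 < 1` under the averaging above and dominates `|δ_k A - L|`, which is
at most `1` and vanishes for `k ≤ m`. Induction on `t` then gives
`|(F^t δ_k) A - L| ≤ ((1 + β) / 2) ^ t * 2 ^ (k - m)` for all `k` simultaneously, and the right-hand
side tends to `0`.
-/

open MeasureTheory Filter

namespace PCA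

/-- Configuration space: `true` is ⊕ (plus), `false` is ⊖ (minus). -/
abbrev Config : Type := ℤ → Bool

/-- Transition probabilities of the PCA. -/
def theta (α β : ℝ) : Bool → Bool → ℝ
  | false, false => 0
  | true,  false => β
  | false, true  => α
  | true,  true  => 1

/-- Thin cylinder determined by a finite set of coordinates and prescribed values. -/
def cyl (S : Finset ℤ) (a : ℤ → Bool) : Set Config := {y | ∀ i ∈ S, y i = a i}

/-- `K` is the update kernel of the PCA: from configuration `x`, all sites update
independently, site `i` becoming plus with probability `theta α β (x i) (x (i+1))`.
This pins down `K x` as the corresponding product of Bernoulli measures, via its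
values on thin cylinders. -/
def IsPCAKernel (α β : ℝ) (K : Config → Measure Config) : Prop :=
  (∀ x, IsProbabilityMeasure (K x)) ∧
  ∀ (x : Config) (S : Finset ℤ) (a : ℤ → Bool),
    K x (cyl S a) =
      ∏ i ∈ S, ENNReal.ofReal
        (if a i then theta α β (x i) (x (i + 1)) else 1 - theta α β (x i) (x (i + 1)))

/-- `F` is the PCA operator with parameters `α, β`: `F μ` is `μ` bound with the
product-Bernoulli update kernel. -/
def IsPCA (α β : ℝ) (F : Measure Config → Measure Config) : Prop :=
  ∃ K : Config → Measure Config, IsPCAKernel α β K ∧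
    ∀ (μ : Measure Config) (A : Set Config), MeasurableSet A →
      F μ A = ∫⁻ x, K x A ∂μ

/-- The configuration "all minuses". -/
def allMinus : Config := fun _ => false

/-- The configuration "all pluses". -/
def allPlus : Config := fun _ => true

/-- Convergence of a sequence of measures to `ν` on all thin cylinders. -/
def TendstoCyl (seq : ℕ → Measure Config) (ν : Measure Config) : Prop :=
  ∀ (S : Finset ℤ) (a : ℤ → Bool),
    Tendsto (fun t => seq t (cyl S a)) atTop (nhds (ν (cyl S a)))

end PCA

namespace PCA

/-- The (⊕⊖, k)-jump configuration: plus strictly to the left of `k`, minus from `k` on. -/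
def jump (k : ℤ) : Config := fun i => decide (i < k)

lemma measurableSet_cyl (S : Finset ℤ) (a : ℤ → Bool) : MeasurableSet (cyl S a) := by
  have h : cyl S a = ⋂ i ∈ S, (fun y : Config => y i) ⁻¹' {a i} := by
    ext y; simp [cyl]
  rw [h]
  exact S.measurableSet_biInter fun i _ => measurable_pi_apply i (measurableSet_singleton _)

lemma isPiSystem_cyl : IsPiSystem {A : Set Config | ∃ S a, A = cyl S a} := by
  rintro _ ⟨S, a, rfl⟩ _ ⟨T, b, rfl⟩ ⟨z, hz1, hz2⟩
  refine ⟨S ∪ T, z, ?_⟩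
  ext y
  simp only [cyl, Set.mem_inter_iff, Set.mem_ofPred_eq, Finset.mem_union] at *
  constructor
  · rintro ⟨h1, h2⟩ i (hi | hi)
    · rw [h1 i hi, hz1 i hi]
    · rw [h2 i hi, hz2 i hi]
  · intro h
    exact ⟨fun i hi => by rw [h i (Or.inl hi), hz1 i hi],
      fun i hi => by rw [h i (Or.inr hi), hz2 i hi]⟩

lemma generateFrom_cyl :
    (inferInstance : MeasurableSpace Config) =
      MeasurableSpace.generateFrom {A : Set Config | ∃ S a, A = cyl S a} := by
  apply le_antisymm
  · refine iSup_le fun i => ?_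
    rw [← measurable_iff_comap_le]
    refine @measurable_to_bool _ (_) _ ?_
    refine MeasurableSpace.measurableSet_generateFrom ⟨{i}, fun _ => true, ?_⟩
    ext y; simp [cyl]
  · refine MeasurableSpace.generateFrom_le ?_
    rintro _ ⟨S, a, rfl⟩
    exact measurableSet_cyl S a

/-- Only site `k - 1` is random when the jump is at `k`, so the product over the base of the cylinder
reduces to the factor at `k - 1`, or is `0` when `a` disagrees with the jump at another site. -/
lemma kernel_jump_cyl {α β : ℝ} (hβ0 : 0 ≤ β) (hβ1 : β ≤ 1) {K : Config → Measure Config}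
    (hK : IsPCAKernel α β K) (k : ℤ) (S : Finset ℤ) (a : ℤ → Bool) :
    K (jump k) (cyl S a) =
      (ENNReal.ofReal β • Measure.dirac (jump k) +
        ENNReal.ofReal (1 - β) • Measure.dirac (jump (k - 1))) (cyl S a) := by
  classical
  rw [hK.2]
  simp only [Measure.add_apply, Measure.smul_apply, smul_eq_mul,
    Measure.dirac_apply' _ (measurableSet_cyl S a), Set.indicator_apply, Pi.one_apply]
  set f : ℤ → ENNReal := fun i => ENNReal.ofReal
    (if a i then theta α β (jump k i) (jump k (i + 1))
      else 1 - theta α β (jump k i) (jump k (i + 1))) with hf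
  have hfne : ∀ i, i ≠ k - 1 → f i = if jump k i = a i then 1 else 0 := by
    intro i hi
    rcases lt_or_gt_of_ne hi with h | h
    · have h1 : i < k := by omega
      have h2 : i + 1 < k := by omega
      cases ha : a i <;> simp [hf, jump, h1, h2, theta, ha]
    · have h1 : ¬ i < k := by omega
      have h2 : ¬ i + 1 < k := by omega
      cases ha : a i <;> simp [hf, jump, h1, h2, theta, ha]
  have hfk : f (k - 1) = ENNReal.ofReal (if a (k - 1) then β else 1 - β) := by
    simp [hf, jump, theta]
  have hjj : ∀ i, i ≠ k - 1 → jump (k - 1) i = jump k i := by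
    intro i hi
    simp only [jump, decide_eq_decide]
    omega
  by_cases hbad : ∃ i ∈ S, i ≠ k - 1 ∧ jump k i ≠ a i
  · obtain ⟨i, hiS, hik, hia⟩ := hbad
    have h1 : jump k ∉ cyl S a := fun h => hia (h i hiS)
    have h2 : jump (k - 1) ∉ cyl S a := fun h => hia (by rw [← hjj i hik]; exact h i hiS)
    rw [Finset.prod_eq_zero hiS ((hfne i hik).trans (if_neg hia))]
    simp [h1, h2]
  · push Not at hbad
    have hone : ∀ i ∈ S, i ≠ k - 1 → f i = 1 := fun i hi hik => by
      rw [hfne i hik, if_pos (hbad i hi hik)]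
    by_cases hkS : k - 1 ∈ S
    · rw [Finset.prod_eq_single_of_mem (k - 1) hkS hone, hfk]
      have h1 : jump k ∈ cyl S a ↔ a (k - 1) = true := by
        refine ⟨fun h => by rw [← h _ hkS]; simp [jump], fun h i hi => ?_⟩
        by_cases hik : i = k - 1
        · subst hik; rw [h]; simp [jump]
        · exact hbad i hi hik
      have h2 : jump (k - 1) ∈ cyl S a ↔ a (k - 1) = false := by
        refine ⟨fun h => by rw [← h _ hkS]; simp [jump], fun h i hi => ?_⟩
        by_cases hik : i = k - 1
        · subst hik; rw [h]; simp [jump]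
        · rw [hjj i hik]; exact hbad i hi hik
      cases ha : a (k - 1) <;> simp [h1, h2, ha]
    · have hne : ∀ i ∈ S, i ≠ k - 1 := fun i hi h => hkS (h ▸ hi)
      have h1 : jump k ∈ cyl S a := fun i hi => hbad i hi (hne i hi)
      have h2 : jump (k - 1) ∈ cyl S a := fun i hi => by
        rw [hjj i (hne i hi)]; exact hbad i hi (hne i hi)
      rw [Finset.prod_eq_one fun i hi => hone i hi (hne i hi), if_pos h1, if_pos h2, mul_one,
        mul_one]
      rw [← ENNReal.ofReal_add hβ0 (by linarith)]
      simp

lemma kernel_jump {α β : ℝ} (hβ0 : 0 ≤ β) (hβ1 : β ≤ 1) {K : Config → Measure Config}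
    (hK : IsPCAKernel α β K) (k : ℤ) :
    K (jump k) = ENNReal.ofReal β • Measure.dirac (jump k) +
      ENNReal.ofReal (1 - β) • Measure.dirac (jump (k - 1)) := by
  have := hK.1 (jump k)
  refine ext_of_generate_finite _ generateFrom_cyl isPiSystem_cyl ?_ ?_
  · rintro _ ⟨S, a, rfl⟩
    exact kernel_jump_cyl hβ0 hβ1 hK k S a
  · simpa [cyl] using kernel_jump_cyl hβ0 hβ1 hK k ∅ (fun _ => true)

/-- One step of the walk of the jump: it stays with probability `β` and otherwise moves one site to
the left. -/
lemma F_dirac_jump {α β : ℝ} (hβ0 : 0 ≤ β) (hβ1 : β ≤ 1) {F : Measure Config → Measure Config}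
    (hF : IsPCA α β F) (k : ℤ) :
    F (Measure.dirac (jump k)) = ENNReal.ofReal β • Measure.dirac (jump k) +
      ENNReal.ofReal (1 - β) • Measure.dirac (jump (k - 1)) := by
  obtain ⟨K, hK, hF⟩ := hF
  ext A hA
  rw [hF _ A hA, lintegral_dirac, kernel_jump hβ0 hβ1 hK]

/-- Linearity of the iterates. It holds for arbitrary measures, because `lintegral` is linear in the
measure even when `x ↦ K x A` is not known to be measurable. -/
lemma F_iterate_linear {α β : ℝ} {F : Measure Config → Measure Config}
    (hF : IsPCA α β F) (t : ℕ) (c d : ENNReal) (μ ν : Measure Config) :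
    F^[t] (c • μ + d • ν) = c • F^[t] μ + d • F^[t] ν := by
  induction t generalizing μ ν with
  | zero => rfl
  | succ t ih =>
    obtain ⟨K, hK, hF⟩ := hF
    have h : F (c • μ + d • ν) = c • F μ + d • F ν := by
      ext A hA
      simp only [Measure.add_apply, Measure.smul_apply, hF _ A hA, lintegral_add_measure,
        lintegral_smul_measure]
    rw [Function.iterate_succ_apply, h, ih]
    rfl

/-- Exponential convergence on a cylinder whose base lies to the right of `m`, uniformly in the
initial jump position `k`. The real number `r` is the mass of the cylinder at time `t`. -/
lemma iterate_bound {α β : ℝ} (hβ0 : 0 ≤ β) (hβ1 : β ≤ 1) {F : Measure Config → Measure Config}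
    (hF : IsPCA α β F) (S : Finset ℤ) (a : ℤ → Bool) (m : ℤ) (hm : ∀ i ∈ S, m ≤ i) (t : ℕ) :
    ∀ k : ℤ, ∃ r : ℝ, 0 ≤ r ∧ F^[t] (Measure.dirac (jump k)) (cyl S a) = ENNReal.ofReal r ∧
      |r - (cyl S a).indicator (fun _ => (1 : ℝ)) allMinus|
        ≤ ((1 + β) / 2) ^ t * (2 : ℝ) ^ (k - m) := by
  classical
  induction t with
  | zero =>
    intro k
    refine ⟨(cyl S a).indicator (fun _ => (1 : ℝ)) (jump k),
      Set.indicator_nonneg (fun _ _ => zero_le_one) _, ?_, ?_⟩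
    · simp only [Function.iterate_zero, id, Measure.dirac_apply' _ (measurableSet_cyl S a),
        Set.indicator_apply]
      split_ifs <;> simp
    · rw [pow_zero, one_mul]
      rcases le_or_gt k m with h | h
      · have : jump k ∈ cyl S a ↔ allMinus ∈ cyl S a := by
          refine forall₂_congr fun i hi => ?_
          have : ¬ i < k := by have := hm i hi; omega
          simp [jump, allMinus, this]
        simp only [Set.indicator_apply, this, sub_self, abs_zero]
        positivity
      · have h1 : (1 : ℝ) ≤ 2 ^ (k - m) := one_le_zpow₀ (by norm_num) (by omega)
        refine le_trans ?_ h1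
        simp only [Set.indicator_apply]
        split_ifs <;> norm_num
  | succ t ih =>
    intro k
    obtain ⟨r, hr0, hr, hrb⟩ := ih k
    obtain ⟨s, hs0, hs, hsb⟩ := ih (k - 1)
    set L := (cyl S a).indicator (fun _ => (1 : ℝ)) allMinus
    have hβ' : 0 ≤ 1 - β := by linarith
    refine ⟨β * r + (1 - β) * s, by positivity, ?_, ?_⟩
    · rw [Function.iterate_succ_apply, F_dirac_jump hβ0 hβ1 hF, F_iterate_linear hF]
      simp only [Measure.add_apply, Measure.smul_apply, smul_eq_mul, hr, hs]
      rw [ENNReal.ofReal_add (by positivity) (by positivity), ENNReal.ofReal_mul hβ0,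
        ENNReal.ofReal_mul hβ']
    · have hz : (2 : ℝ) ^ (k - 1 - m) = 2 ^ (k - m) / 2 := by
        rw [show k - 1 - m = (k - m) - 1 by ring, zpow_sub_one₀ (by norm_num)]
        rfl
      rw [hz] at hsb
      calc |β * r + (1 - β) * s - L| = |β * (r - L) + (1 - β) * (s - L)| := by ring_nf
        _ ≤ β * |r - L| + (1 - β) * |s - L| := by
          refine (abs_add_le _ _).trans_eq ?_
          rw [abs_mul, abs_mul, abs_of_nonneg hβ0, abs_of_nonneg hβ']
        _ ≤ β * (((1 + β) / 2) ^ t * 2 ^ (k - m))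
            + (1 - β) * (((1 + β) / 2) ^ t * (2 ^ (k - m) / 2)) := by gcongr
        _ = ((1 + β) / 2) ^ (t + 1) * 2 ^ (k - m) := by ring

end PCA

/-- if `β < 1` and `x` is the `(⊕⊖, j)`-jump configuration, then
`F^t δ_x` converges on thin cylinders to `δ_allMinus`. -/
theorem pca_plusminus_jump_to_all_minus (α β : ℝ)
    (hα0 : 0 ≤ α) (hα1 : α ≤ 1) (hβ0 : 0 ≤ β) (hβ1 : β < 1)
    (F : Measure PCA.Config → Measure PCA.Config) (hF : PCA.IsPCA α β F)
    (j : ℤ) :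
    PCA.TendstoCyl (fun t => F^[t] (Measure.dirac (fun i => decide (i < j))))
      (Measure.dirac PCA.allMinus) := by
  classical
  intro S a
  obtain ⟨m, hm⟩ := S.bddBelow
  choose r hr0 hr hrb using fun t =>
    PCA.iterate_bound hβ0 hβ1.le hF S a m (fun i hi => hm hi) t j
  have hlim : Tendsto r atTop (nhds ((PCA.cyl S a).indicator (fun _ => (1 : ℝ)) PCA.allMinus)) := by
    rw [tendsto_iff_norm_sub_tendsto_zero]
    refine squeeze_zero (fun _ => norm_nonneg _) hrb ?_
    have h := (tendsto_pow_atTop_nhds_zero_of_lt_one (r := (1 + β) / 2) (by linarith)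
      (by linarith)).mul_const ((2 : ℝ) ^ (j - m))
    rwa [zero_mul] at h
  have hL : Measure.dirac PCA.allMinus (PCA.cyl S a) =
      ENNReal.ofReal ((PCA.cyl S a).indicator (fun _ => (1 : ℝ)) PCA.allMinus) := by
    simp only [Measure.dirac_apply' _ (PCA.measurableSet_cyl S a), Set.indicator_apply]
    split_ifs <;> simp
  rw [hL]
  exact (ENNReal.tendsto_ofReal hlim).congr fun t => (hr t).symm
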